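/- In the (1:1) WMaker–WBreaker game on the edge set of K_n (WBreaker moving first), if WMaker plays according to the strategy S, then as long as |U| > 2, after each completed round at most 2 vertices of U belong to V(B), i.e., at most two vertices unvisited by WMaker have been visited by WBreaker. -/

import Mathlib

/-!
Write `U t` for the vertices unvisited by WMaker after `t` rounds and `W t` for those vertices of
`U t` that WBreaker has visited.  One move of WBreaker adds at most one vertex to `W`, so the bound
`2` can only break in a round in which `W` grows from two vertices `p`, `q` to three, the third
one `x` being new, and WMaker then enters a vertex untouched by WBreaker.  By strategy `S` this
requires all of `p`, `q`, `x` to be joined to WMaker's position `w` by WBreaker's edges.  As `x` is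
new, its only WBreaker-edge comes from WBreaker's previous position
(`eq_of_mem_claimedEdges_of_new`), so both players stood at `w` before the round, and WBreaker
already owned `wp` and `wq`.  One round earlier `w`, `p`, `q` all lay in WMaker's unvisited set.
There were at most two WBreaker-vertices in that set before WBreaker moved to `w`, so `w` was new
for WBreaker at that moment and had a single WBreaker-edge, contradicting that it carries both
`wp` and `wq`.
-/

open scoped Classical

/-- The set of edges claimed during the first `t` moves of a walk `w` on the
vertices of `K_n` (`w i` is the position after `i` moves). -/
def claimedEdges {n : ℕ} (w : ℕ → Fin n) (t : ℕ) : Set (Sym2 (Fin n)) :=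
  {e | ∃ i, i < t ∧ e = s(w i, w (i + 1))}

/-- The set of vertices visited during the first `t` moves of the walk `w`,
i.e. the vertices incident with at least one of the first `t` claimed edges. -/
def visitedBy {n : ℕ} (w : ℕ → Fin n) (t : ℕ) : Set (Fin n) :=
  {v | ∃ i, i < t ∧ (w i = v ∨ w (i + 1) = v)}

/-- `unvisited m t` is the set `U` of vertices not yet visited by WMaker after her
first `t` moves. -/
def unvisited {n : ℕ} (m : ℕ → Fin n) (t : ℕ) : Set (Fin n) :=
  (visitedBy m t)ᶜ

/-- `degB b t v` is the degree `d_B(v)` of the vertex `v` in WBreaker's graph after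
his first `t` moves. -/
noncomputable def degB {n : ℕ} (b : ℕ → Fin n) (t : ℕ) (v : Fin n) : ℕ :=
  {u : Fin n | s(v, u) ∈ claimedEdges b t}.ncard

/-- `degBIn b t v A` is the degree `d_B(v, A)` of `v` towards the set `A` in
WBreaker's graph after his first `t` moves. -/
noncomputable def degBIn {n : ℕ} (b : ℕ → Fin n) (t : ℕ) (v : Fin n)
    (A : Set (Fin n)) : ℕ :=
  {u : Fin n | u ∈ A ∧ s(v, u) ∈ claimedEdges b t}.ncard

/-- A legal play of the `(1:1)` WMaker–WBreaker game on `E(K_n)` in which WBreaker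
moves first: `b j` (resp. `m j`) is WBreaker's (resp. WMaker's) position after `j`
moves; round `i + 1` consists of WBreaker's move `b i → b (i+1)` followed by WMaker's
move `m i → m (i+1)`.  Each move claims an edge with distinct endpoints, incident with
the player's current position, that has not been claimed by the opponent. -/
def LegalPlay {n : ℕ} (b m : ℕ → Fin n) : Prop :=
  (∀ i, b i ≠ b (i + 1)) ∧ (∀ i, m i ≠ m (i + 1)) ∧
  (∀ i, s(b i, b (i + 1)) ∉ claimedEdges m i) ∧
  (∀ i, s(m i, m (i + 1)) ∉ claimedEdges b (i + 1))

/-- WMaker's strategy `S`.  She starts at the vertex `b 1` in which WBreaker finished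
his first move and claims an edge `v₁u` with `d_B(u) = 0`.  In every later round
(WMaker's `(i+1)`-st move, from her position `w = m i`, after WBreaker's `(i+1)`-st
move): if there is an edge `pq` of WBreaker with both endpoints in `U`, she moves to an
endpoint of such an edge (choosing, whenever the edges to both endpoints are free, an
endpoint of maximal `d_B`-degree); otherwise, as long as `|U| ≥ 3`, she moves to an
unvisited vertex `u ∈ U`, reachable by a free edge, maximizing `d_B(u)` among such
vertices (if all of these have `d_B(u) = 0` this is an arbitrary free edge `wu`,
`u ∈ U`).  Ties are broken arbitrarily, so `FollowsS` is the predicate that a given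
play conforms to some instance of `S`. -/
def FollowsS {n : ℕ} (b m : ℕ → Fin n) : Prop :=
  m 0 = b 1 ∧ degB b 1 (m 1) = 0 ∧
  ∀ i, 1 ≤ i →
    ((∃ p q, p ∈ unvisited m i ∧ q ∈ unvisited m i ∧
        s(p, q) ∈ claimedEdges b (i + 1)) →
      ∃ q, m (i + 1) ∈ unvisited m i ∧ q ∈ unvisited m i ∧
        s(m (i + 1), q) ∈ claimedEdges b (i + 1) ∧
        (s(m i, q) ∉ claimedEdges b (i + 1) →
          degB b (i + 1) q ≤ degB b (i + 1) (m (i + 1)))) ∧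
    ((¬ ∃ p q, p ∈ unvisited m i ∧ q ∈ unvisited m i ∧
        s(p, q) ∈ claimedEdges b (i + 1)) →
      3 ≤ (unvisited m i).ncard →
        m (i + 1) ∈ unvisited m i ∧
        ∀ u ∈ unvisited m i, s(m i, u) ∉ claimedEdges b (i + 1) →
          degB b (i + 1) u ≤ degB b (i + 1) (m (i + 1)))

theorem visitedBy_succ {n : ℕ} {w : ℕ → Fin n} {t : ℕ} (ht : 1 ≤ t) {v : Fin n}
    (hv : v ∈ visitedBy w (t + 1)) : v ∈ visitedBy w t ∨ v = w (t + 1) := by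
  obtain ⟨i, hi, h⟩ := hv
  rcases Nat.lt_succ_iff_lt_or_eq.mp hi with hi | rfl
  · exact Or.inl ⟨i, hi, h⟩
  · rcases h with h | h
    · -- the position before the last move was already reached by the preceding move
      exact Or.inl ⟨i - 1, by omega, Or.inr (by rw [Nat.sub_add_cancel ht]; exact h)⟩
    · exact Or.inr h.symm

theorem visitedBy_mono {n : ℕ} {w : ℕ → Fin n} {s t : ℕ} (h : s ≤ t) :
    visitedBy w s ⊆ visitedBy w t :=
  fun _ ⟨i, hi, hv⟩ => ⟨i, hi.trans_le h, hv⟩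

theorem unvisited_anti {n : ℕ} {w : ℕ → Fin n} {s t : ℕ} (h : s ≤ t) :
    unvisited w t ⊆ unvisited w s :=
  Set.compl_subset_compl.mpr (visitedBy_mono h)

theorem mem_visitedBy_of_edge {n : ℕ} {w : ℕ → Fin n} {t : ℕ} {u v : Fin n}
    (h : s(u, v) ∈ claimedEdges w t) : u ∈ visitedBy w t := by
  obtain ⟨i, hi, h⟩ := h
  rcases Sym2.eq_iff.mp h with ⟨h, -⟩ | ⟨h, -⟩
  · exact ⟨i, hi, Or.inl h.symm⟩
  · exact ⟨i, hi, Or.inr h.symm⟩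

theorem claimedEdges_succ {n : ℕ} {w : ℕ → Fin n} {t : ℕ} {e : Sym2 (Fin n)}
    (h : e ∈ claimedEdges w (t + 1)) : e ∈ claimedEdges w t ∨ e = s(w t, w (t + 1)) := by
  obtain ⟨i, hi, h⟩ := h
  rcases Nat.lt_succ_iff_lt_or_eq.mp hi with hi | rfl
  · exact Or.inl ⟨i, hi, h⟩
  · exact Or.inr h

/-- A vertex reached for the first time by the last move is joined by a claimed edge only to the
previous position of the walk. -/
theorem eq_of_mem_claimedEdges_of_new {n : ℕ} {w : ℕ → Fin n} {t : ℕ} {u : Fin n}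
    (hnew : w (t + 1) ∉ visitedBy w t) (h : s(w (t + 1), u) ∈ claimedEdges w (t + 1)) :
    u = w t := by
  rcases claimedEdges_succ h with h | h
  · exact absurd (mem_visitedBy_of_edge h) hnew
  · rcases Sym2.eq_iff.mp h with ⟨h1, h2⟩ | ⟨-, h2⟩
    · rw [h2, h1]
    · exact h2

theorem degB_pos {n : ℕ} {b : ℕ → Fin n} {t : ℕ} {v : Fin n} (hv : v ∈ visitedBy b t) :
    0 < degB b t v := by
  obtain ⟨i, hi, h⟩ := hv
  rw [degB, Set.ncard_pos]
  rcases h with rfl | rfl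
  · exact ⟨b (i + 1), i, hi, rfl⟩
  · exact ⟨b i, i, hi, Sym2.eq_swap⟩

theorem degB_eq_zero {n : ℕ} {b : ℕ → Fin n} {t : ℕ} {v : Fin n} (hv : v ∉ visitedBy b t) :
    degB b t v = 0 := by
  rw [degB, Set.ncard_eq_zero]
  ext u
  simpa using fun h => hv (mem_visitedBy_of_edge h)

/-- In every round after the first, strategy `S` sends WMaker to an unvisited vertex. -/
theorem FollowsS.next_mem_unvisited {n : ℕ} {b m : ℕ → Fin n} (hS : FollowsS b m) {i : ℕ}
    (hi : 1 ≤ i) (hU : 2 < (unvisited m i).ncard) : m (i + 1) ∈ unvisited m i := by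
  by_cases hE : ∃ p q, p ∈ unvisited m i ∧ q ∈ unvisited m i ∧ s(p, q) ∈ claimedEdges b (i + 1)
  · obtain ⟨q, h, -⟩ := (hS.2.2 i hi).1 hE
    exact h
  · exact ((hS.2.2 i hi).2 hE hU).1

/-- If WMaker enters a vertex unvisited by WBreaker, then every vertex of `U` visited by WBreaker
is joined to WMaker's position by an edge of WBreaker. -/
theorem FollowsS.blocked {n : ℕ} {b m : ℕ → Fin n} (hS : FollowsS b m) {i : ℕ}
    (hi : 1 ≤ i) (hU : 2 < (unvisited m i).ncard) (hm : m (i + 1) ∉ visitedBy b (i + 1))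
    {u : Fin n} (hu : u ∈ unvisited m i) (hub : u ∈ visitedBy b (i + 1)) :
    s(m i, u) ∈ claimedEdges b (i + 1) := by
  by_cases hE : ∃ p q, p ∈ unvisited m i ∧ q ∈ unvisited m i ∧ s(p, q) ∈ claimedEdges b (i + 1)
  · obtain ⟨q, -, -, h, -⟩ := (hS.2.2 i hi).1 hE
    exact absurd (mem_visitedBy_of_edge h) hm
  · by_contra hfree
    have h1 := ((hS.2.2 i hi).2 hE hU).2 u hu hfree
    have h2 := degB_pos hub
    rw [degB_eq_zero hm] at h1
    omega

/-- **Lemma 2.**  In the `(1:1)` WMaker–WBreaker game on `E(K_n)` (WBreaker first),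
if WMaker plays according to strategy `S` then, as long as `|U| > 2`, after each
completed round at most `2` of the vertices unvisited by WMaker have been visited by
WBreaker. -/
theorem strategyS_few_breaker_vertices_in_U {n : ℕ} (b m : ℕ → Fin n)
    (hlegal : LegalPlay b m) (hS : FollowsS b m) :
    ∀ t, 1 ≤ t → 2 < (unvisited m t).ncard →
      (unvisited m t ∩ visitedBy b t).ncard ≤ 2 := by
  intro t
  induction t using Nat.strong_induction_on with
  | _ t ih =>
  intro ht hU
  obtain rfl | ⟨i, hi, rfl⟩ : t = 1 ∨ ∃ i, 1 ≤ i ∧ t = i + 1 := by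
    rcases Nat.eq_or_lt_of_le ht with h | h
    · exact Or.inl h.symm
    · exact Or.inr ⟨t - 1, by omega, by omega⟩
  · have hsub : unvisited m 1 ∩ visitedBy b 1 ⊆ {b 0, b 1} := by
      rintro v ⟨-, j, hj, h⟩
      obtain rfl : j = 0 := by omega
      rcases h with rfl | rfl <;> simp
    exact (Set.ncard_le_ncard hsub).trans ((Set.ncard_insert_le _ _).trans (by simp))
  have hUi : 2 < (unvisited m i).ncard :=
    hU.trans_le (Set.ncard_le_ncard (unvisited_anti (Nat.le_succ i)))
  have hWi := ih i (Nat.lt_succ_self i) hi hUi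
  -- `W (i+1)` gains at most WBreaker's new position
  have hsub : unvisited m (i + 1) ∩ visitedBy b (i + 1) ⊆
      insert (b (i + 1)) (unvisited m i ∩ visitedBy b i) := by
    rintro v ⟨hv, hvb⟩
    rcases visitedBy_succ hi hvb with h | h
    · exact Or.inr ⟨unvisited_anti (Nat.le_succ i) hv, h⟩
    · exact Or.inl h
  by_contra hcon
  push Not at hcon
  have hnew : b (i + 1) ∉ unvisited m i ∩ visitedBy b i := by
    intro h
    rw [Set.insert_eq_of_mem h] at hsub
    have := Set.ncard_le_ncard hsub
    omega
  -- by cardinality the inclusion is an equality, so WMaker removed none of the vertices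
  have heq : unvisited m (i + 1) ∩ visitedBy b (i + 1) =
      insert (b (i + 1)) (unvisited m i ∩ visitedBy b i) := by
    refine Set.eq_of_subset_of_ncard_le hsub ?_
    rw [Set.ncard_insert_of_notMem hnew]
    omega
  have hx : b (i + 1) ∈ unvisited m (i + 1) ∩ visitedBy b (i + 1) := by
    rw [heq]; exact Set.mem_insert _ _
  have hxU : b (i + 1) ∈ unvisited m i := unvisited_anti (Nat.le_succ i) hx.1
  have hxnew : b (i + 1) ∉ visitedBy b i := fun h => hnew ⟨hxU, h⟩
  have hmvis : m (i + 1) ∈ visitedBy m (i + 1) := ⟨i, Nat.lt_succ_self i, Or.inr rfl⟩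
  have hmU : m (i + 1) ∈ unvisited m i := hS.next_mem_unvisited hi hUi
  have hmB : m (i + 1) ∉ visitedBy b (i + 1) := by
    intro h
    have hmem : m (i + 1) ∈ insert (b (i + 1)) (unvisited m i ∩ visitedBy b i) := by
      rcases visitedBy_succ hi h with h | h
      · exact Or.inr ⟨hmU, h⟩
      · exact Or.inl h
    rw [← heq] at hmem
    exact hmem.1 hmvis
  -- hence both players stood at the same vertex before the round
  have hmb : m i = b i := by
    have h := hS.blocked hi hUi hmB hxU hx.2
    rw [Sym2.eq_swap] at h
    exact eq_of_mem_claimedEdges_of_new hxnew h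
  have hWi2 : 1 < (unvisited m i ∩ visitedBy b i).ncard := by
    have := Set.ncard_insert_le (b (i + 1)) (unvisited m i ∩ visitedBy b i)
    rw [← heq] at this
    omega
  obtain ⟨p, hp, q, hq, hpq⟩ := (Set.one_lt_ncard (Set.toFinite _)).mp hWi2
  have hold : ∀ u ∈ unvisited m i ∩ visitedBy b i, s(b i, u) ∈ claimedEdges b i := by
    intro u hu
    have h := hS.blocked hi hUi hmB hu.1 (visitedBy_mono (Nat.le_succ i) hu.2)
    rw [hmb] at h
    rcases claimedEdges_succ h with h | h
    · exact h
    · rw [Sym2.congr_right] at h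
      exact absurd (h ▸ hu.2) hxnew
  obtain rfl | ⟨k, hk, rfl⟩ : i = 1 ∨ ∃ k, 1 ≤ k ∧ i = k + 1 := by
    rcases Nat.eq_or_lt_of_le hi with h | h
    · exact Or.inl h.symm
    · exact Or.inr ⟨i - 1, by omega, by omega⟩
  · -- WMaker started at `b 1` and moved away from it
    exact hlegal.2.1 0 (hS.1.trans hmb.symm)
  have hUk : 2 < (unvisited m k).ncard :=
    hUi.trans_le (Set.ncard_le_ncard (unvisited_anti (Nat.le_succ k)))
  have hWk := ih k (by omega) hk hUk
  have hwU : b (k + 1) ∈ unvisited m k := hmb ▸ hS.next_mem_unvisited hk hUk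
  have hback : ∀ u ∈ unvisited m (k + 1) ∩ visitedBy b (k + 1),
      u ≠ b (k + 1) ∧ u ∈ unvisited m k ∩ visitedBy b k := by
    intro u hu
    have hne : u ≠ b (k + 1) := by
      rintro rfl
      exact hu.1 ⟨k, Nat.lt_succ_self k, Or.inr hmb⟩
    exact ⟨hne, unvisited_anti (Nat.le_succ k) hu.1, (visitedBy_succ hk hu.2).resolve_right hne⟩
  -- otherwise `b (k + 1)`, `p`, `q` would be three vertices of `W k`
  have hwnew : b (k + 1) ∉ visitedBy b k := by
    intro h
    have h3 : ({b (k + 1), p, q} : Set (Fin n)) ⊆ unvisited m k ∩ visitedBy b k := by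
      rintro v (rfl | rfl | rfl)
      · exact ⟨hwU, h⟩
      · exact (hback _ hp).2
      · exact (hback _ hq).2
    have hc := Set.ncard_le_ncard h3
    rw [Set.ncard_eq_three.mpr
      ⟨_, _, _, (hback p hp).1.symm, (hback q hq).1.symm, hpq, rfl⟩] at hc
    omega
  exact hpq ((eq_of_mem_claimedEdges_of_new hwnew (hold p hp)).trans
    (eq_of_mem_claimedEdges_of_new hwnew (hold q hq)).symm)
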